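/- arXiv:1306.4403 — 2 statements merged into one kernel-verified Lean document; each statement's English description precedes it below -/
import Mathlib

section
/- Let N ≥ 1 and let μ be a measure on the space S_N of real symmetric N×N matrices that is invariant under U ↦ O·U·Oᵀ for every real orthogonal matrix O, and suppose ∫ tr(U²) dμ(U) < ∞. Then there exist real constants α and β such that for every real symmetric N×N matrix J, ∫ (tr(J·U))² dμ(U) = α·tr(J²) + β·(tr J)². -/
/-!
An invariant second moment only has to be computed on diagonal matrices: writing a symmetric `J`
as `O * D * Oᵀ` with `D = diag d`, cyclicity of the trace and invariance of `μ` give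
`∫ tr(J U)² = ∫ tr(D U)² = ∑ i j, d i * d j * ∫ U i i * U j j`.
Invariance under permutation matrices makes the moments `∫ U i i * U j j` take only two values, one
for `i = j` and one (`β`) for `i ≠ j` (`Equiv.Perm` acts transitively on pairs of distinct
indices). With `α + β` the diagonal value, the double sum is `α ∑ d i ^ 2 + β (∑ d i) ^ 2`, that is
`α tr(J²) + β (tr J)²`. Finiteness of `∫ tr(U²)` makes each moment an absolutely convergent
integral, so that the sum can be taken out of the integral.
-/

open MeasureTheory

/-- The product (Borel) σ-algebra on real `N×N` matrices. -/
instance matrixMeasurableSpace (N : ℕ) : MeasurableSpace (Matrix (Fin N) (Fin N) ℝ) :=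
  inferInstanceAs (MeasurableSpace (Fin N → Fin N → ℝ))

/-- Conjugation `U ↦ O·U·Oᵀ` on the space of real symmetric matrices. -/
def conjMap {N : ℕ} (O : Matrix (Fin N) (Fin N) ℝ)
    (U : {U : Matrix (Fin N) (Fin N) ℝ // U.IsSymm}) :
    {U : Matrix (Fin N) (Fin N) ℝ // U.IsSymm} :=
  ⟨O * U.val * O.transpose, by
    unfold Matrix.IsSymm
    rw [Matrix.transpose_mul, Matrix.transpose_mul, Matrix.transpose_transpose, U.prop.eq,
      ← Matrix.mul_assoc]⟩

lemma measurable_symm_entry {N : ℕ} (i j : Fin N) :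
    Measurable (fun U : {U : Matrix (Fin N) (Fin N) ℝ // U.IsSymm} => U.val i j) :=
  (measurable_pi_apply j).comp
    ((measurable_pi_apply (X := fun _ : Fin N => Fin N → ℝ) i).comp measurable_subtype_coe)

lemma sq_diag_le_trace {N : ℕ} (U : {U : Matrix (Fin N) (Fin N) ℝ // U.IsSymm}) (i : Fin N) :
    U.val i i ^ 2 ≤ Matrix.trace (U.val * U.val) := by
  have hs : ∀ a b, U.val b a = U.val a b := fun a b => U.prop.apply a b
  have h : Matrix.trace (U.val * U.val) = ∑ a, ∑ b, U.val a b ^ 2 := by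
    simp only [Matrix.trace, Matrix.diag, Matrix.mul_apply]
    refine Finset.sum_congr rfl fun a _ => Finset.sum_congr rfl fun b _ => ?_
    rw [hs a b, sq]
  rw [h]
  calc U.val i i ^ 2 ≤ ∑ b, U.val i b ^ 2 :=
        Finset.single_le_sum (f := fun b => U.val i b ^ 2) (fun b _ => sq_nonneg _)
          (Finset.mem_univ i)
    _ ≤ _ := Finset.single_le_sum (f := fun a => ∑ b, U.val a b ^ 2)
          (fun a _ => Finset.sum_nonneg fun b _ => sq_nonneg _) (Finset.mem_univ i)

lemma integrable_diag_mul {N : ℕ} {μ : Measure {U : Matrix (Fin N) (Fin N) ℝ // U.IsSymm}}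
    (hint : Integrable (fun U : {U : Matrix (Fin N) (Fin N) ℝ // U.IsSymm} =>
      Matrix.trace (U.val * U.val)) μ) (i j : Fin N) :
    Integrable (fun U : {U : Matrix (Fin N) (Fin N) ℝ // U.IsSymm} =>
      U.val i i * U.val j j) μ := by
  refine hint.mono'
    ((measurable_symm_entry i i).mul (measurable_symm_entry j j)).aestronglyMeasurable
    (Filter.Eventually.of_forall fun U => ?_)
  have h1 := sq_diag_le_trace U i
  have h2 := sq_diag_le_trace U j
  rw [Real.norm_eq_abs, abs_le]
  constructor
  · nlinarith [sq_nonneg (U.val i i + U.val j j)]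
  · nlinarith [sq_nonneg (U.val i i - U.val j j)]

/-- Change of variables `U ↦ O * U * Oᵀ`; measurability of `f` is all that is needed, since
both sides take the same default value when `f` is not integrable. -/
lemma integral_comp_conjMap {N : ℕ} {μ : Measure {U : Matrix (Fin N) (Fin N) ℝ // U.IsSymm}}
    {O : Matrix (Fin N) (Fin N) ℝ} (h : MeasurePreserving (conjMap O) μ μ)
    {f : {U : Matrix (Fin N) (Fin N) ℝ // U.IsSymm} → ℝ} (hf : Measurable f) :
    ∫ U, f (conjMap O U) ∂μ = ∫ U, f U ∂μ := by
  have := integral_map (μ := μ) h.measurable.aemeasurable (f := f) hf.aestronglyMeasurable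
  rw [h.map_eq] at this
  exact this.symm

lemma integral_diag_mul_perm {N : ℕ} {μ : Measure {U : Matrix (Fin N) (Fin N) ℝ // U.IsSymm}}
    (hinv : ∀ O : Matrix (Fin N) (Fin N) ℝ, O.transpose * O = 1 →
      MeasurePreserving (conjMap O) μ μ) (σ : Equiv.Perm (Fin N)) (i j : Fin N) :
    ∫ U, U.val (σ i) (σ i) * U.val (σ j) (σ j) ∂μ = ∫ U, U.val i i * U.val j j ∂μ := by
  have hO : (σ.permMatrix ℝ).transpose * σ.permMatrix ℝ = 1 := by
    rw [Matrix.transpose_permMatrix, ← Matrix.permMatrix_mul]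
    simp
  have key : ∀ (U : {U : Matrix (Fin N) (Fin N) ℝ // U.IsSymm}) (k : Fin N),
      (conjMap (σ.permMatrix ℝ) U).val k k = U.val (σ k) (σ k) := by
    intro U k
    simp [conjMap, Matrix.mul_apply, Equiv.Perm.permMatrix, PEquiv.toMatrix_apply, Equiv.symm_apply_eq]
  have h := integral_comp_conjMap (hinv _ hO) (f := fun U => U.val i i * U.val j j)
    ((measurable_symm_entry i i).mul (measurable_symm_entry j j))
  simpa only [key] using h

lemma exists_perm_pair {ι : Type*} [DecidableEq ι] {i j k l : ι} (hij : i ≠ j) (hkl : k ≠ l) :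
    ∃ σ : Equiv.Perm ι, σ i = k ∧ σ j = l := by
  refine ⟨(Equiv.swap i k).trans (Equiv.swap (Equiv.swap i k j) l), ?_, ?_⟩
  · have : k ≠ Equiv.swap i k j := by
      intro h
      apply hij
      apply (Equiv.swap i k).injective
      rw [Equiv.swap_apply_left]
      exact h
    simp [Equiv.swap_apply_of_ne_of_ne this hkl]
  · simp

/-- Second-moment structure of an `O(N)`-conjugation invariant measure on symmetric matrices with
finite second moment: there are constants `α, β` with
`∫ (tr(J·U))² dμ(U) = α·tr(J²) + β·(tr J)²` for all symmetric `J`. -/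
theorem stmt_12 (N : ℕ) (hN : 1 ≤ N)
    (μ : Measure {U : Matrix (Fin N) (Fin N) ℝ // U.IsSymm})
    (hinv : ∀ O : Matrix (Fin N) (Fin N) ℝ, O.transpose * O = 1 →
      MeasurePreserving (conjMap O) μ μ)
    (hint : Integrable (fun U : {U : Matrix (Fin N) (Fin N) ℝ // U.IsSymm} =>
      Matrix.trace (U.val * U.val)) μ) :
    ∃ α β : ℝ, ∀ J : Matrix (Fin N) (Fin N) ℝ, J.IsSymm →
      ∫ U : {U : Matrix (Fin N) (Fin N) ℝ // U.IsSymm},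
          (Matrix.trace (J * U.val)) ^ 2 ∂μ
        = α * Matrix.trace (J * J) + β * (Matrix.trace J) ^ 2 := by
  set m : Fin N → Fin N → ℝ := fun i j => ∫ U, U.val i i * U.val j j ∂μ with hm
  have hperm : ∀ (σ : Equiv.Perm (Fin N)) i j, m (σ i) (σ j) = m i j :=
    fun σ i j => integral_diag_mul_perm hinv σ i j
  obtain ⟨α, β, hαβ⟩ : ∃ α β : ℝ, ∀ i j, m i j = (if i = j then α else 0) + β := by
    have hdiag : ∀ i, m i i = m ⟨0, hN⟩ ⟨0, hN⟩ := fun i => by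
      simpa using hperm (Equiv.swap ⟨0, hN⟩ i) ⟨0, hN⟩ ⟨0, hN⟩
    obtain ⟨β, hβ⟩ : ∃ β, ∀ i j, i ≠ j → m i j = β := by
      by_cases h : ∃ i j : Fin N, i ≠ j
      · obtain ⟨k, l, hkl⟩ := h
        refine ⟨m k l, fun i j hij => ?_⟩
        obtain ⟨σ, rfl, rfl⟩ := exists_perm_pair hkl hij
        exact hperm σ k l
      · exact ⟨0, fun i j hij => (h ⟨i, j, hij⟩).elim⟩
    refine ⟨m ⟨0, hN⟩ ⟨0, hN⟩ - β, β, fun i j => ?_⟩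
    by_cases hij : i = j
    · subst hij; simp [hdiag i]
    · simp [hij, hβ i j hij]
  have hD : ∀ d : Fin N → ℝ,
      ∫ U : {U : Matrix (Fin N) (Fin N) ℝ // U.IsSymm},
        (Matrix.trace (Matrix.diagonal d * U.val)) ^ 2 ∂μ
        = α * ∑ i, d i * d i + β * (∑ i, d i) ^ 2 := by
    intro d
    have h1 : ∀ U : {U : Matrix (Fin N) (Fin N) ℝ // U.IsSymm},
        (Matrix.trace (Matrix.diagonal d * U.val)) ^ 2
          = ∑ i, ∑ j, d i * d j * (U.val i i * U.val j j) := by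
      intro U
      simp only [Matrix.trace, Matrix.diag, Matrix.diagonal_mul]
      rw [sq, Finset.sum_mul_sum]
      refine Finset.sum_congr rfl fun i _ => Finset.sum_congr rfl fun j _ => by ring
    simp_rw [h1]
    have hI := fun i j => (integrable_diag_mul hint i j).const_mul (d i * d j)
    rw [integral_finsetSum _ fun i _ => integrable_finsetSum _ fun j _ => hI i j]
    have h2 : ∀ i, ∫ U : {U : Matrix (Fin N) (Fin N) ℝ // U.IsSymm},
        ∑ j, d i * d j * (U.val i i * U.val j j) ∂μ = α * (d i * d i) + ∑ j, β * (d i * d j) := by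
      intro i
      rw [integral_finsetSum _ fun j _ => hI i j]
      have h3 : ∀ j, ∫ U : {U : Matrix (Fin N) (Fin N) ℝ // U.IsSymm},
          d i * d j * (U.val i i * U.val j j) ∂μ
          = (if i = j then α * (d i * d j) else 0) + β * (d i * d j) := by
        intro j
        rw [integral_const_mul]
        change d i * d j * m i j = _
        rw [hαβ]
        split_ifs <;> ring
      simp_rw [h3]
      rw [Finset.sum_add_distrib]
      simp
    simp_rw [h2]
    rw [Finset.sum_add_distrib, sq, Finset.sum_mul_sum, Finset.mul_sum, Finset.mul_sum]
    simp_rw [Finset.mul_sum]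
  refine ⟨α, β, fun J hJ => ?_⟩
  obtain ⟨O, d, hO, hO', hJd⟩ : ∃ (O : Matrix (Fin N) (Fin N) ℝ) (d : Fin N → ℝ),
      O.transpose * O = 1 ∧ O * O.transpose = 1 ∧
        J = O * Matrix.diagonal d * O.transpose := by
    have hH : J.IsHermitian := by
      rw [Matrix.IsHermitian, Matrix.conjTranspose_eq_transpose_of_trivial]
      exact hJ
    have hs : ∀ A : Matrix (Fin N) (Fin N) ℝ, star A = A.transpose := fun A => by
      rw [Matrix.star_eq_conjTranspose, Matrix.conjTranspose_eq_transpose_of_trivial]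
    refine ⟨hH.eigenvectorUnitary, hH.eigenvalues, ?_, ?_, ?_⟩
    · rw [← hs]; exact Unitary.coe_star_mul_self _
    · rw [← hs]; exact Unitary.coe_mul_star_self _
    · have := hH.spectral_theorem
      rw [← hs]
      simpa [Unitary.conjStarAlgAut_apply] using this
  have htr : Matrix.trace J = ∑ i, d i := by
    rw [hJd, Matrix.trace_mul_comm, ← Matrix.mul_assoc, hO, Matrix.one_mul,
      Matrix.trace_diagonal]
  have htr2 : Matrix.trace (J * J) = ∑ i, d i * d i := by
    have : J * J = O * Matrix.diagonal (fun i => d i * d i) * O.transpose := by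
      rw [← Matrix.diagonal_mul_diagonal, hJd]
      calc _ = O * Matrix.diagonal d * (O.transpose * O) * Matrix.diagonal d * O.transpose := by
            simp only [Matrix.mul_assoc]
        _ = _ := by rw [hO]; simp only [Matrix.mul_assoc, Matrix.one_mul]
    rw [this, Matrix.trace_mul_comm, ← Matrix.mul_assoc, hO, Matrix.one_mul,
      Matrix.trace_diagonal]
  have hmeas : Measurable (fun U : {U : Matrix (Fin N) (Fin N) ℝ // U.IsSymm} =>
      (Matrix.trace (Matrix.diagonal d * U.val)) ^ 2) := by
    simp only [Matrix.trace, Matrix.diag, Matrix.diagonal_mul]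
    exact (Finset.measurable_fun_sum _ fun i _ =>
      (measurable_symm_entry i i).const_mul (d i)).pow_const 2
  rw [htr, htr2, ← hD d, ← integral_comp_conjMap (hinv O.transpose (by simpa using hO')) hmeas]
  refine integral_congr_ae (Filter.Eventually.of_forall fun U => ?_)
  have : Matrix.trace (J * U.val)
      = Matrix.trace (Matrix.diagonal d * (conjMap O.transpose U).val) := by
    simp only [conjMap, Matrix.transpose_transpose]
    rw [hJd, Matrix.mul_assoc, Matrix.mul_assoc, Matrix.trace_mul_comm]
    simp only [Matrix.mul_assoc]
  simp only [this]
end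

section
/- For every real number t, lim_{k→∞} (∫₀^π cos(t·√k·cos θ) · (sin θ)^k dθ) / (∫₀^π (sin θ)^k dθ) = e^{−t²/2}. -/
/-!
Substituting `θ = π/2 + u/√k` and multiplying by `√k` turns the numerator into
`∫ cos (t √k sin (u/√k)) cos (u/√k)^k du` over `|u| ≤ (π/2)√k`. Pointwise the integrand tends to
`cos (t u) exp (-u²/2)`, since `√k sin (u/√k) → u` and `cos x - 1 = -2 sin² (x/2)`. The bound
`cos x ≤ 1 - (2/π²) x²` on `[-π, π]` dominates it by the Gaussian `exp (-(2/π²) u²)`, so dominated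
convergence applies. The denominator is the case `t = 0`, and the ratio of the two limits is the
Fourier transform of the standard Gaussian.
-/

open MeasureTheory Filter

lemma tendsto_sqrt_mul_sin (c : ℝ) :
    Tendsto (fun k : ℕ => Real.sqrt k * Real.sin (c / Real.sqrt k)) atTop (nhds c) := by
  have hs : Tendsto (fun k : ℕ => Real.sqrt k) atTop atTop :=
    Real.tendsto_sqrt_atTop.comp tendsto_natCast_atTop_atTop
  have h0 : Tendsto (fun k : ℕ => c / Real.sqrt k) atTop (nhds 0) :=
    hs.const_div_atTop c
  have h1 : Tendsto (fun k : ℕ => c * Real.sinc (c / Real.sqrt k)) atTop (nhds (c * 1)) := by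
    have := (Real.continuous_sinc.tendsto 0).comp h0
    rw [Real.sinc_zero] at this
    exact this.const_mul c
  rw [mul_one] at h1
  refine h1.congr' ?_
  filter_upwards [eventually_gt_atTop 0] with k hk
  have hk' : 0 < Real.sqrt k := Real.sqrt_pos.2 (by exact_mod_cast hk)
  by_cases hc : c = 0
  · simp [hc]
  · rw [Real.sinc_of_ne_zero (div_ne_zero hc hk'.ne')]
    field_simp

lemma tendsto_cos_div_sqrt_pow (u : ℝ) :
    Tendsto (fun k : ℕ => Real.cos (u / Real.sqrt k) ^ k) atTop
      (nhds (Real.exp (-(1 / 2) * u ^ 2))) := by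
  have h : Tendsto (fun k : ℕ => (k : ℝ) * (Real.cos (u / Real.sqrt k) - 1)) atTop
      (nhds (-(1 / 2) * u ^ 2)) := by
    have h1 := ((tendsto_sqrt_mul_sin (u / 2)).pow 2).const_mul (-2)
    convert h1 using 2 with k
    · have h2 : u / Real.sqrt k = 2 * (u / 2 / Real.sqrt k) := by ring
      rw [h2, Real.cos_two_mul, mul_pow, Real.sq_sqrt (Nat.cast_nonneg k), Real.cos_sq']
      ring
    · ring
  have := Real.tendsto_one_add_pow_exp_of_tendsto h
  simpa using this

/-- The numerator after the substitution `θ = π/2 + u/√k`, extended by zero to the whole line. -/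
lemma sqrt_mul_integral_eq (t : ℝ) {k : ℕ} (hk : 0 < k) :
    Real.sqrt k *
        (∫ θ in (0 : ℝ)..Real.pi, Real.cos (t * Real.sqrt k * Real.cos θ) * Real.sin θ ^ k) =
      ∫ u : ℝ, (Set.Ioc (-(Real.pi / 2) * Real.sqrt k) (Real.pi / 2 * Real.sqrt k)).indicator
        (fun u => Real.cos (t * (Real.sqrt k * Real.sin (u / Real.sqrt k))) *
          Real.cos (u / Real.sqrt k) ^ k) u := by
  have hk' : 0 < Real.sqrt k := Real.sqrt_pos.2 (by exact_mod_cast hk)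
  have h := intervalIntegral.integral_comp_div_add
    (a := -(Real.pi / 2) * Real.sqrt k) (b := Real.pi / 2 * Real.sqrt k)
    (fun θ => Real.cos (t * Real.sqrt k * Real.cos θ) * Real.sin θ ^ k) hk'.ne' (Real.pi / 2)
  rw [mul_div_cancel_right₀ _ hk'.ne', mul_div_cancel_right₀ _ hk'.ne', neg_add_cancel,
    add_halves, smul_eq_mul] at h
  rw [← h, integral_indicator measurableSet_Ioc, intervalIntegral.integral_of_le]
  · congr 1
    ext u
    rw [Real.cos_add_pi_div_two, Real.sin_add_pi_div_two, mul_neg, Real.cos_neg, mul_assoc]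
  · have := Real.pi_pos
    nlinarith [mul_pos this hk']

lemma cos_div_sqrt_pow_le {k : ℕ} (hk : 0 < k) {u : ℝ}
    (hu : u ∈ Set.Ioc (-(Real.pi / 2) * Real.sqrt k) (Real.pi / 2 * Real.sqrt k)) :
    |Real.cos (u / Real.sqrt k) ^ k| ≤ Real.exp (-(2 / Real.pi ^ 2) * u ^ 2) := by
  have hk0 : (0 : ℝ) < k := by exact_mod_cast hk
  have hk' : 0 < Real.sqrt k := Real.sqrt_pos.2 hk0
  have hpi := Real.pi_pos
  have h1 : -(Real.pi / 2) ≤ u / Real.sqrt k := (le_div_iff₀ hk').2 hu.1.le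
  have h2 : u / Real.sqrt k ≤ Real.pi / 2 := (div_le_iff₀ hk').2 hu.2
  have hc : 0 ≤ Real.cos (u / Real.sqrt k) :=
    Real.cos_nonneg_of_neg_pi_div_two_le_of_le h1 h2
  rw [abs_of_nonneg (pow_nonneg hc k)]
  have h3 : Real.cos (u / Real.sqrt k) ≤
      Real.exp (-(2 / Real.pi ^ 2) * (u / Real.sqrt k) ^ 2) := by
    have h4 := Real.cos_le_one_sub_mul_cos_sq (x := u / Real.sqrt k)
      (abs_le.2 ⟨by linarith, by linarith⟩)
    have h5 := Real.add_one_le_exp (-(2 / Real.pi ^ 2) * (u / Real.sqrt k) ^ 2)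
    linarith
  refine (pow_le_pow_left₀ hc h3 k).trans_eq ?_
  rw [← Real.exp_nat_mul, div_pow, Real.sq_sqrt hk0.le]
  congr 1
  field_simp

lemma tendsto_sqrt_mul_integral (t : ℝ) :
    Tendsto (fun k : ℕ => Real.sqrt k *
        (∫ θ in (0 : ℝ)..Real.pi, Real.cos (t * Real.sqrt k * Real.cos θ) * Real.sin θ ^ k))
      atTop (nhds (∫ u : ℝ, Real.cos (t * u) * Real.exp (-(1 / 2) * u ^ 2))) := by
  have key : Tendsto (fun k : ℕ => ∫ u : ℝ,
      (Set.Ioc (-(Real.pi / 2) * Real.sqrt k) (Real.pi / 2 * Real.sqrt k)).indicator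
        (fun u => Real.cos (t * (Real.sqrt k * Real.sin (u / Real.sqrt k))) *
          Real.cos (u / Real.sqrt k) ^ k) u) atTop
      (nhds (∫ u : ℝ, Real.cos (t * u) * Real.exp (-(1 / 2) * u ^ 2))) := by
    refine tendsto_integral_filter_of_dominated_convergence
      (fun u => Real.exp (-(2 / Real.pi ^ 2) * u ^ 2)) ?_ ?_
      (integrable_exp_neg_mul_sq (by positivity)) ?_
    · refine Eventually.of_forall fun k => ?_
      exact (Continuous.aestronglyMeasurable (by fun_prop)).indicator measurableSet_Ioc
    · filter_upwards [eventually_gt_atTop 0] with k hk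
      refine ae_of_all _ fun u => ?_
      by_cases hu : u ∈ Set.Ioc (-(Real.pi / 2) * Real.sqrt k) (Real.pi / 2 * Real.sqrt k)
      · rw [Set.indicator_of_mem hu, Real.norm_eq_abs, abs_mul]
        refine (mul_le_of_le_one_left (abs_nonneg _) (Real.abs_cos_le_one _)).trans ?_
        exact cos_div_sqrt_pow_le hk hu
      · rw [Set.indicator_of_notMem hu, norm_zero]
        positivity
    · refine ae_of_all _ fun u => ?_
      have h1 := (((Real.continuous_cos.tendsto _).comp
        ((tendsto_sqrt_mul_sin u).const_mul t)).mul (tendsto_cos_div_sqrt_pow u))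
      refine h1.congr' ?_
      have hs : Tendsto (fun k : ℕ => Real.pi / 2 * Real.sqrt k) atTop atTop :=
        (Real.tendsto_sqrt_atTop.comp tendsto_natCast_atTop_atTop).const_mul_atTop
          (by positivity)
      filter_upwards [hs.eventually_gt_atTop |u|] with k hk
      have hu := abs_lt.1 hk
      have hmem : u ∈ Set.Ioc (-(Real.pi / 2) * Real.sqrt k) (Real.pi / 2 * Real.sqrt k) :=
        ⟨by linarith [hu.1], hu.2.le⟩
      rw [Set.indicator_of_mem hmem]
      rfl
  refine key.congr' ?_
  filter_upwards [eventually_gt_atTop 0] with k hk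
  exact (sqrt_mul_integral_eq t hk).symm

lemma integral_cos_mul_gaussian (t : ℝ) :
    ∫ u : ℝ, Real.cos (t * u) * Real.exp (-(1 / 2) * u ^ 2) =
      Real.sqrt (2 * Real.pi) * Real.exp (-(t ^ 2) / 2) := by
  have h := fourierIntegral_gaussian (b := 1 / 2) (by norm_num) (t : ℂ)
  have hre := congrArg Complex.re h
  have hint : Integrable (fun x : ℝ =>
      Complex.exp (Complex.I * t * x) * Complex.exp (-(1 / 2) * (x : ℂ) ^ 2)) := by
    refine (integrable_exp_neg_mul_sq (b := 1 / 2) (by norm_num)).mono'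
      (Continuous.aestronglyMeasurable (by fun_prop)) (ae_of_all _ fun x => ?_)
    rw [norm_mul, Complex.norm_exp, Complex.norm_exp]
    simp [← Complex.ofReal_pow]
  have hL : ∀ x : ℝ, (Complex.exp (Complex.I * t * x) *
      Complex.exp (-(1 / 2) * (x : ℂ) ^ 2)).re =
      Real.cos (t * x) * Real.exp (-(1 / 2) * x ^ 2) := by
    intro x
    have e1 : Complex.exp (-(1 / 2) * (x : ℂ) ^ 2) =
        ((Real.exp (-(1 / 2) * x ^ 2) : ℝ) : ℂ) := by push_cast; rfl
    have e2 : Complex.I * t * x = ((t * x : ℝ) : ℂ) * Complex.I := by push_cast; ring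
    rw [e1, e2, Complex.re_mul_ofReal, Complex.exp_ofReal_mul_I_re]
  have hR : ((Real.pi / (1 / 2) : ℂ) ^ (1 / 2 : ℂ) *
      Complex.exp (-(t : ℂ) ^ 2 / (4 * (1 / 2)))) =
      ((Real.sqrt (2 * Real.pi) * Real.exp (-(t ^ 2) / 2) : ℝ) : ℂ) := by
    have e1 : (Real.pi / (1 / 2) : ℂ) = ((2 * Real.pi : ℝ) : ℂ) := by push_cast; ring
    have e2 : (1 / 2 : ℂ) = ((1 / 2 : ℝ) : ℂ) := by push_cast; rfl
    rw [e1, e2, ← Complex.ofReal_cpow (by positivity), ← Real.sqrt_eq_rpow]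
    push_cast
    congr 2
    ring
  rw [hR, Complex.ofReal_re] at hre
  rw [← hre]
  have h6 := integral_re (𝕜 := ℂ) hint
  simp only [RCLike.re_eq_complex_re, hL] at h6
  exact h6

/-- Laplace/steepest-descent limit: for every real `t`,
`lim_{k→∞} (∫₀^π cos(t√k cos θ)(sin θ)^k dθ) / (∫₀^π (sin θ)^k dθ) = e^{−t²/2}`. -/
theorem stmt_16 (t : ℝ) :
    Tendsto
      (fun k : ℕ =>
        (∫ θ in (0 : ℝ)..Real.pi, Real.cos (t * Real.sqrt k * Real.cos θ) * Real.sin θ ^ k) /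
          ∫ θ in (0 : ℝ)..Real.pi, Real.sin θ ^ k)
      atTop (nhds (Real.exp (-(t ^ 2) / 2))) := by
  have h0 := tendsto_sqrt_mul_integral 0
  have ht := tendsto_sqrt_mul_integral t
  rw [integral_cos_mul_gaussian] at h0 ht
  have hpos : Real.sqrt (2 * Real.pi) ≠ 0 := by positivity
  have h := ht.div h0 (mul_ne_zero hpos (Real.exp_pos _).ne')
  rw [mul_div_mul_left _ _ hpos] at h
  simp only [zero_mul, Real.cos_zero, one_mul, ne_eq, OfNat.ofNat_ne_zero, not_false_eq_true,
    zero_pow, neg_zero, zero_div, Real.exp_zero, div_one] at h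
  refine h.congr' ?_
  filter_upwards [eventually_gt_atTop 0] with k hk
  have hk' : 0 < Real.sqrt k := Real.sqrt_pos.2 (by exact_mod_cast hk)
  exact mul_div_mul_left _ _ hk'.ne'
end
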